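/- Let H = ⟨Y|S⟩ be a finitely presented group with cusp complex 1-skeleton Γ⁽¹⁾_H̃ for parameters ψ > 1, ω > 0. Then every geodesic α in Γ⁽¹⁾_H̃ decomposes as α = α₁α₂α₃ where α₁ is a strictly descending path, α₂ is a level path whose shadow is a geodesic in H between the shadows of its endpoints, and α₃ is a strictly ascending path; moreover the length of the level part α₂ is at most 2ωψ. -/

import Mathlib

/-!
STATEMENT 9: In the 1-skeleton of the cusp complex of a finitely presented group
`H = ⟨Y|S⟩` (parameters `ψ > 1`, `ω > 0`), every geodesic `α` decomposes as
`α = α₁ α₂ α₃` with `α₁` strictly descending, `α₂` level with shadow a geodesic in `H`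
between the shadows of its endpoints, and `α₃` strictly ascending; moreover the level
part `α₂` has length at most `2ωψ`.
-/

open Set

variable {H : Type*} [Group H]

/-- Horizontal adjacency in the cusp complex. -/
def Horiz (Y : Set H) (u v : H × ℕ) : Prop :=
  u.2 = v.2 ∧ ∃ y : H, (y ∈ Y ∨ y⁻¹ ∈ Y) ∧ v.1 = u.1 * y

/-- Vertical adjacency in the cusp complex. -/
def Vert (u v : H × ℕ) : Prop :=
  u.1 = v.1 ∧ (v.2 = u.2 + 1 ∨ u.2 = v.2 + 1)

/-- Adjacency in the 1-skeleton of the cusp complex. -/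
def CuspAdj (Y : Set H) (u v : H × ℕ) : Prop := Horiz Y u v ∨ Vert u v

/-- Edge lengths in the cusp complex. -/
noncomputable def stepLen (ψ ω : ℝ) (u v : H × ℕ) : ℝ :=
  if u.2 = v.2 then ψ ^ (-(u.2 : ℝ)) else ω * Real.log ψ

/-- `p` is an edge path with `n` edges in the cusp complex. -/
def IsPathOn (Y : Set H) (p : ℕ → H × ℕ) (n : ℕ) : Prop :=
  ∀ k < n, CuspAdj Y (p k) (p (k + 1))

/-- Metric length of the edge path `p` (with `n` edges). -/
noncomputable def pathLen (ψ ω : ℝ) (p : ℕ → H × ℕ) (n : ℕ) : ℝ :=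
  ∑ k ∈ Finset.range n, stepLen ψ ω (p k) (p (k + 1))

/-- The induced path metric on the 1-skeleton of the cusp complex. -/
noncomputable def cuspDist (Y : Set H) (ψ ω : ℝ) (u v : H × ℕ) : ℝ :=
  sInf {c | ∃ (n : ℕ) (p : ℕ → H × ℕ),
    IsPathOn Y p n ∧ p 0 = u ∧ p n = v ∧ c = pathLen ψ ω p n}

/-- A geodesic edge path. -/
def IsGeodesicPath (Y : Set H) (ψ ω : ℝ) (p : ℕ → H × ℕ) (n : ℕ) : Prop :=
  IsPathOn Y p n ∧ pathLen ψ ω p n = cuspDist Y ψ ω (p 0) (p n)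

/-- Word (edge-path) distance in the Cayley graph of `H` with respect to `Y`;
the shadow of a level path is a geodesic in `H` iff its number of edges equals this
distance between the shadows of its endpoints. -/
noncomputable def cayleyDist (Y : Set H) (g h : H) : ℕ :=
  sInf {m : ℕ | ∃ q : ℕ → H, q 0 = g ∧ q m = h ∧
    ∀ k < m, ∃ y : H, (y ∈ Y ∨ y⁻¹ ∈ Y) ∧ q (k + 1) = q k * y}

/-- There is an edge path from `u` to `v` of length `c`. -/
def HasPath (Y : Set H) (ψ ω : ℝ) (u v : H × ℕ) (c : ℝ) : Prop :=
  ∃ (n : ℕ) (p : ℕ → H × ℕ), IsPathOn Y p n ∧ p 0 = u ∧ p n = v ∧ c = pathLen ψ ω p n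

theorem HasPath.refl (Y : Set H) (ψ ω : ℝ) (u : H × ℕ) : HasPath Y ψ ω u u 0 :=
  ⟨0, fun _ => u, fun k hk => by omega, rfl, rfl, by simp [pathLen]⟩

theorem HasPath.snoc {Y : Set H} {ψ ω : ℝ} {u v w : H × ℕ} {c : ℝ}
    (h : HasPath Y ψ ω u v c) (hvw : CuspAdj Y v w) :
    HasPath Y ψ ω u w (c + stepLen ψ ω v w) := by
  obtain ⟨n, p, hp, h0, hn, rfl⟩ := h
  refine ⟨n + 1, fun k => if k ≤ n then p k else w, ?_, by simp [h0], by simp, ?_⟩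
  · intro k hk
    rcases Nat.lt_or_ge k n with h | h
    · have h1 : k ≤ n := h.le
      have h2 : k + 1 ≤ n := h
      simpa [h1, h2] using hp k h
    · obtain rfl : k = n := by omega
      simpa [hn] using hvw
  · unfold pathLen
    rw [Finset.sum_range_succ]
    congr 1
    · apply Finset.sum_congr rfl
      intro k hk
      have hk := Finset.mem_range.1 hk
      have h1 : k ≤ n := hk.le
      have h2 : k + 1 ≤ n := hk
      simp [h1, h2]
    · simp [hn]

theorem HasPath.append {Y : Set H} {ψ ω : ℝ} {u : H × ℕ} {c : ℝ} (q : ℕ → H × ℕ) (m : ℕ)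
    (hq : IsPathOn Y q m) (h : HasPath Y ψ ω u (q 0) c) :
    HasPath Y ψ ω u (q m) (c + pathLen ψ ω q m) := by
  induction m with
  | zero => simpa [pathLen] using h
  | succ m ih =>
    have := (ih (fun k hk => hq k (by omega))).snoc (hq m (by omega))
    unfold pathLen at this ⊢
    rwa [Finset.sum_range_succ, ← add_assoc]

theorem HasPath.trans {Y : Set H} {ψ ω : ℝ} {u v w : H × ℕ} {c d : ℝ}
    (h : HasPath Y ψ ω u v c) (h' : HasPath Y ψ ω v w d) : HasPath Y ψ ω u w (c + d) := by
  obtain ⟨m, q, hq, h0, hm, rfl⟩ := h'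
  subst h0 hm
  exact h.append q m hq

theorem HasPath.sub {Y : Set H} {ψ ω : ℝ} {p : ℕ → H × ℕ} {n a b : ℕ}
    (hp : IsPathOn Y p n) (hab : a ≤ b) (hb : b ≤ n) :
    HasPath Y ψ ω (p a) (p b) (∑ k ∈ Finset.Ico a b, stepLen ψ ω (p k) (p (k + 1))) := by
  refine ⟨b - a, fun k => p (a + k), fun k hk => hp (a + k) (by omega), rfl, ?_, ?_⟩
  · simp [Nat.add_sub_cancel' hab]
  · rw [Finset.sum_Ico_eq_sum_range]; rfl

theorem stepLen_nonneg' {ψ ω : ℝ} (hψ : 1 < ψ) (hω : 0 < ω) (u v : H × ℕ) :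
    0 ≤ stepLen ψ ω u v := by
  unfold stepLen
  have := Real.log_pos hψ
  split_ifs <;> positivity

theorem geod_min {Y : Set H} {ψ ω : ℝ} (hψ : 1 < ψ) (hω : 0 < ω)
    {p : ℕ → H × ℕ} {n a b : ℕ} (hp : IsGeodesicPath Y ψ ω p n) (hab : a ≤ b) (hb : b ≤ n)
    {c : ℝ} (hc : HasPath Y ψ ω (p a) (p b) c) :
    ∑ k ∈ Finset.Ico a b, stepLen ψ ω (p k) (p (k + 1)) ≤ c := by
  have h1 := ((HasPath.sub (ψ := ψ) (ω := ω) hp.1 (Nat.zero_le a) (hab.trans hb)).trans hc).trans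
    (HasPath.sub (ψ := ψ) (ω := ω) hp.1 hb le_rfl)
  have h2 := hp.2
  have h3 : cuspDist Y ψ ω (p 0) (p n) ≤ _ := csInf_le ⟨0, by
    rintro c ⟨m, q, -, -, -, rfl⟩
    exact Finset.sum_nonneg fun k _ => stepLen_nonneg' hψ hω _ _⟩ h1
  rw [← h2, pathLen, Finset.range_eq_Ico,
    ← Finset.sum_Ico_consecutive _ (Nat.zero_le a) (hab.trans hb),
    ← Finset.sum_Ico_consecutive _ hab hb] at h3
  linarith

theorem HasPath.level {Y : Set H} (ψ ω : ℝ) (d m : ℕ) (q : ℕ → H)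
    (hq : ∀ k < m, ∃ y : H, (y ∈ Y ∨ y⁻¹ ∈ Y) ∧ q (k + 1) = q k * y) :
    HasPath Y ψ ω (q 0, d) (q m, d) (m * ψ ^ (-(d : ℝ))) := by
  refine ⟨m, fun k => (q k, d), fun k hk => Or.inl ⟨rfl, hq k hk⟩, rfl, rfl, ?_⟩
  simp [pathLen, stepLen]

theorem HasPath.down (Y : Set H) (ψ ω : ℝ) (g : H) (d : ℕ) :
    HasPath Y ψ ω (g, d) (g, d + 1) (ω * Real.log ψ) := by
  have := (HasPath.refl Y ψ ω (g, d)).snoc (w := (g, d + 1)) (Or.inr ⟨rfl, Or.inl rfl⟩)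
  simpa [stepLen] using this

theorem HasPath.up (Y : Set H) (ψ ω : ℝ) (g : H) (d : ℕ) :
    HasPath Y ψ ω (g, d + 1) (g, d) (ω * Real.log ψ) := by
  have := (HasPath.refl Y ψ ω (g, d + 1)).snoc (w := (g, d)) (Or.inr ⟨rfl, Or.inr rfl⟩)
  simpa [stepLen] using this

theorem HasPath.horiz {Y : Set H} (ψ ω : ℝ) {g h : H} (d : ℕ)
    (hy : ∃ y : H, (y ∈ Y ∨ y⁻¹ ∈ Y) ∧ h = g * y) :
    HasPath Y ψ ω (g, d) (h, d) (ψ ^ (-(d : ℝ))) := by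
  have := (HasPath.refl Y ψ ω (g, d)).snoc (w := (h, d)) (Or.inl ⟨rfl, hy⟩)
  simpa [stepLen] using this

theorem pow_succ_eq {ψ : ℝ} (hψ : 1 < ψ) (d : ℕ) :
    ψ ^ (-(d : ℝ)) = ψ * ψ ^ (-((d + 1 : ℕ) : ℝ)) := by
  have h0 : 0 < ψ := by linarith
  rw [Real.rpow_neg h0.le, Real.rpow_neg h0.le, Real.rpow_natCast, Real.rpow_natCast]
  field_simp
  ring

theorem pow_lt {ψ : ℝ} (hψ : 1 < ψ) (d : ℕ) :
    ψ ^ (-((d + 1 : ℕ) : ℝ)) < ψ ^ (-(d : ℝ)) := by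
  rw [pow_succ_eq hψ d]
  have : 0 < ψ ^ (-((d + 1 : ℕ) : ℝ)) := by positivity
  nlinarith

section
variable {Y : Set H} {ψ ω : ℝ} {p : ℕ → H × ℕ} {n : ℕ}

theorem adj_level {u v : H × ℕ} (h : CuspAdj Y u v) (hl : v.2 = u.2) :
    ∃ y : H, (y ∈ Y ∨ y⁻¹ ∈ Y) ∧ v.1 = u.1 * y := by
  rcases h with h | h
  · exact h.2
  · have := h.2; omega

theorem adj_vert {u v : H × ℕ} (h : CuspAdj Y u v) (hl : v.2 ≠ u.2) :
    v.1 = u.1 ∧ (v.2 = u.2 + 1 ∨ u.2 = v.2 + 1) := by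
  rcases h with h | h
  · exact absurd h.1.symm hl
  · exact ⟨h.1.symm, h.2⟩

theorem no_LD (hψ : 1 < ψ) (hω : 0 < ω) (hp : IsGeodesicPath Y ψ ω p n) (k : ℕ)
    (hk : k + 1 < n) (hl : (p (k + 1)).2 = (p k).2) :
    (p (k + 2)).2 ≠ (p (k + 1)).2 + 1 := by
  intro hd
  have a1 := adj_level (hp.1 k (by omega)) hl
  have a2 := (adj_vert (hp.1 (k + 1) hk) (by show (p (k + 2)).2 ≠ _; omega)).1
  have hm := fun c => geod_min (c := c) hψ hω hp (show k ≤ k + 2 by omega) (by omega)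
  simp only [Finset.sum_Ico_succ_top (show k ≤ k + 1 by omega), Finset.sum_Ico_succ_top (le_refl k),
    Finset.Ico_self, Finset.sum_empty] at hm
  change (p (k + 2)).1 = _ at a2
  simp only [stepLen, hl, hd, show k + 1 + 1 = k + 2 from rfl] at hm
  generalize p k = u at *
  generalize p (k + 1) = v at *
  generalize p (k + 2) = w at *
  obtain ⟨g, d⟩ := u
  obtain ⟨g', d'⟩ := v
  obtain ⟨g'', d''⟩ := w
  simp only at *
  subst a2 hl hd
  have := hm _ ((HasPath.down Y ψ ω g d').trans (HasPath.horiz ψ ω (d' + 1) a1))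
  have h2 := pow_lt hψ d'
  simp at this h2
  linarith

theorem no_AL (hψ : 1 < ψ) (hω : 0 < ω) (hp : IsGeodesicPath Y ψ ω p n) (k : ℕ)
    (hk : k + 1 < n) (hd : (p k).2 = (p (k + 1)).2 + 1) :
    (p (k + 2)).2 ≠ (p (k + 1)).2 := by
  intro hl
  have a1 := adj_level (hp.1 (k + 1) (by omega)) hl
  have a2 := (adj_vert (hp.1 k (by omega)) (by omega)).1
  have hm := fun c => geod_min (c := c) hψ hω hp (show k ≤ k + 2 by omega) (by omega)
  simp only [Finset.sum_Ico_succ_top (show k ≤ k + 1 by omega), Finset.sum_Ico_succ_top (le_refl k),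
    Finset.Ico_self, Finset.sum_empty] at hm
  simp only [stepLen, hl, hd, show k + 1 + 1 = k + 2 from rfl] at hm a1
  generalize p k = u at *
  generalize p (k + 1) = v at *
  generalize p (k + 2) = w at *
  obtain ⟨g, d⟩ := u
  obtain ⟨g', d'⟩ := v
  obtain ⟨g'', d''⟩ := w
  simp only at *
  subst a2 hl hd
  have := hm _ ((HasPath.horiz ψ ω (d'' + 1) a1).trans (HasPath.up Y ψ ω g'' d''))
  have h2 := pow_lt hψ d''
  simp at this h2
  linarith

theorem no_AD (hψ : 1 < ψ) (hω : 0 < ω) (hp : IsGeodesicPath Y ψ ω p n) (k : ℕ)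
    (hk : k + 1 < n) (hd : (p k).2 = (p (k + 1)).2 + 1) :
    (p (k + 2)).2 ≠ (p (k + 1)).2 + 1 := by
  intro hl
  have a1 := (adj_vert (hp.1 (k + 1) (by omega)) (by show (p (k + 2)).2 ≠ _; omega)).1
  have a2 := (adj_vert (hp.1 k (by omega)) (by omega)).1
  have e : p (k + 2) = p k := Prod.ext (a1.trans a2) (by omega)
  have hm := geod_min (c := 0) hψ hω hp (show k ≤ k + 2 by omega) (by omega)
    (by rw [e]; exact HasPath.refl _ _ _ _)
  simp only [Finset.sum_Ico_succ_top (show k ≤ k + 1 by omega), Finset.sum_Ico_succ_top (le_refl k),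
    Finset.Ico_self, Finset.sum_empty] at hm
  have h1 := stepLen_nonneg' hψ hω (p (k + 1)) (p (k + 2))
  have h2 : stepLen ψ ω (p k) (p (k + 1)) = ω * Real.log ψ := by
    unfold stepLen; rw [if_neg (by omega)]
  have h3 := mul_pos hω (Real.log_pos hψ)
  simp only [show k + 1 + 1 = k + 2 from rfl] at hm
  linarith

theorem level_part (hψ : 1 < ψ) (hω : 0 < ω) (hp : IsGeodesicPath Y ψ ω p n) {i j : ℕ}
    (hij : i ≤ j) (hj : j ≤ n) (hL : ∀ k, i ≤ k → k < j → (p (k + 1)).2 = (p k).2) :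
    cayleyDist Y (p i).1 (p j).1 = j - i ∧
      (∑ k ∈ Finset.Ico i j, stepLen ψ ω (p k) (p (k + 1))) ≤ 2 * ω * ψ := by
  have h0 : 0 < ψ := by linarith
  have hdep : ∀ k, i ≤ k → k ≤ j → (p k).2 = (p i).2 := by
    intro k hk
    induction k, hk using Nat.le_induction with
    | base => intro _; rfl
    | succ k hk ih => intro h; rw [hL k hk (by omega), ih (by omega)]
  have hsum : ∑ k ∈ Finset.Ico i j, stepLen ψ ω (p k) (p (k + 1))
      = ((j - i : ℕ) : ℝ) * ψ ^ (-((p i).2 : ℝ)) := by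
    rw [Finset.sum_congr rfl (g := fun _ => ψ ^ (-((p i).2 : ℝ)))]
    · simp
    · intro k hk
      rw [Finset.mem_Ico] at hk
      rw [stepLen, if_pos (hL k hk.1 hk.2).symm, hdep k hk.1 hk.2.le]
  have hwalk : ∀ k < j - i, ∃ y : H, (y ∈ Y ∨ y⁻¹ ∈ Y) ∧
      (p (i + (k + 1))).1 = (p (i + k)).1 * y := fun k hk =>
    adj_level (hp.1 (i + k) (by omega)) (hL (i + k) (by omega) (by omega))
  have epj : p j = ((p j).1, (p i).2) := Prod.ext rfl (hdep j hij le_rfl)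
  have hmem : (j - i) ∈ {m : ℕ | ∃ q : ℕ → H, q 0 = (p i).1 ∧ q m = (p j).1 ∧
      ∀ k < m, ∃ y : H, (y ∈ Y ∨ y⁻¹ ∈ Y) ∧ q (k + 1) = q k * y} :=
    ⟨fun k => (p (i + k)).1, rfl, by simp [Nat.add_sub_cancel' hij], hwalk⟩
  constructor
  · apply le_antisymm (Nat.sInf_le hmem)
    obtain ⟨q, q0, qm, hq⟩ := Nat.sInf_mem ⟨_, hmem⟩
    have h := HasPath.level ψ ω (p i).2 _ q hq
    rw [q0, qm, ← epj] at h
    have h2 := geod_min hψ hω hp hij hj h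
    rw [hsum] at h2
    have h3 : 0 < ψ ^ (-((p i).2 : ℝ)) := by positivity
    exact_mod_cast le_of_mul_le_mul_right h2 h3
  · obtain ⟨q, q0, qm, hq⟩ := hmem
    have h := ((HasPath.down Y ψ ω (q 0) (p i).2).trans
      (HasPath.level ψ ω ((p i).2 + 1) _ q hq)).trans (HasPath.up Y ψ ω _ _)
    rw [q0, qm, ← epj] at h
    have h2 := geod_min hψ hω hp hij hj h
    rw [hsum] at h2 ⊢
    rw [pow_succ_eq hψ] at h2 ⊢
    generalize ψ ^ (-(((p i).2 + 1 : ℕ) : ℝ)) = x at *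
    generalize ((j - i : ℕ) : ℝ) = m at *
    have hlog : Real.log ψ ≤ ψ - 1 := Real.log_le_sub_one_of_pos h0
    have h4 : (m * x) * (ψ - 1) ≤ (2 * ω) * (ψ - 1) := by nlinarith
    have h5 := le_of_mul_le_mul_right h4 (by linarith)
    nlinarith
end

/-- Decomposition of geodesics in the cusp complex into a strictly descending part,
a level part whose shadow is a geodesic of `H` and whose length is at most `2ωψ`,
and a strictly ascending part. -/
theorem cusp_geodesic_decomposition
    (Y : Set H) (hYfin : Y.Finite) (hYgen : Subgroup.closure Y = ⊤)
    (ψ ω : ℝ) (hψ : 1 < ψ) (hω : 0 < ω)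
    (p : ℕ → H × ℕ) (n : ℕ) (hp : IsGeodesicPath Y ψ ω p n) :
    ∃ i j : ℕ, i ≤ j ∧ j ≤ n ∧
      (∀ k < i, (p (k + 1)).1 = (p k).1 ∧ (p (k + 1)).2 = (p k).2 + 1) ∧
      (∀ k, i ≤ k → k < j → (p (k + 1)).2 = (p k).2) ∧
      (∀ k, j ≤ k → k < n → (p (k + 1)).1 = (p k).1 ∧ (p k).2 = (p (k + 1)).2 + 1) ∧
      cayleyDist Y (p i).1 (p j).1 = j - i ∧
      (∑ k ∈ Finset.Ico i j, stepLen ψ ω (p k) (p (k + 1))) ≤ 2 * ω * ψ := by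
  classical
  have hi : ∃ i, n ≤ i ∨ (p (i + 1)).2 ≠ (p i).2 + 1 := ⟨n, Or.inl le_rfl⟩
  obtain ⟨i, hi1, hi2⟩ : ∃ i, (n ≤ i ∨ (p (i + 1)).2 ≠ (p i).2 + 1) ∧
      ∀ k < i, k < n ∧ (p (k + 1)).2 = (p k).2 + 1 :=
    ⟨Nat.find hi, Nat.find_spec hi, fun k hk => by
      have := Nat.find_min hi hk; push Not at this; exact this⟩
  have hin : i ≤ n := by
    rcases Nat.eq_zero_or_pos i with h | h
    · omega
    · have := (hi2 (i - 1) (by omega)).1; omega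
  have hj : ∃ j, i ≤ j ∧ (n ≤ j ∨ (p (j + 1)).2 ≠ (p j).2) := ⟨n, hin, Or.inl le_rfl⟩
  obtain ⟨j, hij, hj1, hj2⟩ : ∃ j, i ≤ j ∧ (n ≤ j ∨ (p (j + 1)).2 ≠ (p j).2) ∧
      ∀ k, i ≤ k → k < j → k < n ∧ (p (k + 1)).2 = (p k).2 :=
    ⟨Nat.find hj, (Nat.find_spec hj).1, (Nat.find_spec hj).2, fun k hik hk => by
      have := Nat.find_min hj hk; push Not at this; exact this hik⟩
  have hjn : j ≤ n := by
    rcases Nat.eq_or_lt_of_le hij with h | h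
    · omega
    · have := (hj2 (j - 1) (by omega) (by omega)).1; omega
  have hL : ∀ k, i ≤ k → k < j → (p (k + 1)).2 = (p k).2 := fun k h1 h2 => (hj2 k h1 h2).2
  have hA : ∀ k, j ≤ k → k < n → (p k).2 = (p (k + 1)).2 + 1 := by
    intro k hk
    induction k, hk using Nat.le_induction with
    | base =>
      intro hn
      have hne : (p (j + 1)).2 ≠ (p j).2 := by
        rcases hj1 with h | h
        · omega
        · exact h
      rcases (adj_vert (hp.1 j hn) hne).2 with h | h
      · exfalso
        rcases Nat.eq_or_lt_of_le hij with h' | h'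
        · subst h'
          rcases hi1 with h1 | h1
          · omega
          · exact h1 h
        · obtain ⟨t, rfl⟩ : ∃ t, j = t + 1 := ⟨j - 1, by omega⟩
          exact no_LD hψ hω hp t hn (hL t (by omega) (by omega)) h
      · exact h
    | succ k hk ih =>
      intro hn
      have hA := ih (by omega)
      rcases (adj_vert (hp.1 (k + 1) hn) (no_AL hψ hω hp k hn hA)).2 with h | h
      · exact absurd h (no_AD hψ hω hp k hn hA)
      · exact h
  refine ⟨i, j, hij, hjn, fun k hk => ?_, hL, fun k h1 h2 => ?_, level_part hψ hω hp hij hjn hL⟩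
  · obtain ⟨h1, h2⟩ := hi2 k hk
    exact ⟨(adj_vert (hp.1 k h1) (by omega)).1, h2⟩
  · have := hA k h1 h2
    exact ⟨(adj_vert (hp.1 k h2) (by omega)).1, this⟩
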